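/- For every integer d ≥ 1, every natural number k, and every real m ∈ [0, 1], it holds that 2·(1 − g_d^{(k)}(m)) ≤ (2·(1 − m))^{(d+1)^k}. -/

import Mathlib

noncomputable def g (d : ℕ) : ℝ → ℝ :=
  fun m => ∑ i ∈ Finset.range (d + 1),
    (1 / 4 ^ i : ℝ) * (Nat.choose (2 * i) i) * (m * (1 - m ^ 2) ^ i)

/-!
Write `a i = C(2i, i) / 4 ^ i`. The derivative of `g d` telescopes to the single term
`(2d + 1) * a d * (1 - m ^ 2) ^ d`. It is nonnegative on `[-1, 1]`, and `g d` fixes `±1`, so `g d`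
maps `[-1, 1]` into itself. Since `(2d + 1) * a d ≤ d + 1` and `1 - m ^ 2 ≤ 2 * (1 - m)`, the
derivative of `2 * g d m` is at most minus that of `(2 * (1 - m)) ^ (d + 1)`; integrating from `m`
to `1` gives the case `k = 1`, and iterating it on `[-1, 1]` raises the exponent to `(d + 1) ^ k`.
-/

open Set

/-- The central binomial coefficient normalised by its row sum, `C(2i, i) / 4 ^ i`; these are the
coefficients in the expansion of `g d` in powers of `1 - m ^ 2`. -/
noncomputable def normalizedCentralBinom (i : ℕ) : ℝ := i.centralBinom / 4 ^ i

theorem normalizedCentralBinom_zero : normalizedCentralBinom 0 = 1 := by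
  simp [normalizedCentralBinom]

theorem normalizedCentralBinom_nonneg (i : ℕ) : 0 ≤ normalizedCentralBinom i := by
  unfold normalizedCentralBinom
  positivity

theorem succ_mul_normalizedCentralBinom_succ (i : ℕ) :
    2 * ((i : ℝ) + 1) * normalizedCentralBinom (i + 1) =
      (2 * i + 1) * normalizedCentralBinom i := by
  have binom_succ : ((i : ℝ) + 1) * (i + 1).centralBinom = 2 * (2 * i + 1) * i.centralBinom :=
    mod_cast i.succ_mul_centralBinom_succ
  simp only [normalizedCentralBinom, pow_succ]
  field_simp
  linear_combination 2 * binom_succ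

theorem two_mul_add_one_mul_normalizedCentralBinom_le (i : ℕ) :
    (2 * i + 1) * normalizedCentralBinom i ≤ i + 1 := by
  induction i with
  | zero => simp [normalizedCentralBinom_zero]
  | succ i ih =>
    have le_half : normalizedCentralBinom (i + 1) ≤ 1 / 2 := by
      rw [← succ_mul_normalizedCentralBinom_succ] at ih
      exact le_of_mul_le_mul_left (by linarith) (by positivity : 0 < 2 * ((i : ℝ) + 1))
    calc (2 * ((i + 1 : ℕ) : ℝ) + 1) * normalizedCentralBinom (i + 1)
        ≤ (2 * ((i + 1 : ℕ) : ℝ) + 1) * (1 / 2) := by gcongr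
      _ ≤ ((i + 1 : ℕ) : ℝ) + 1 := by linarith

theorem one_sub_sq_nonneg {R : Type*} [CommRing R] [LinearOrder R] [IsStrictOrderedRing R] {x : R}
    (hx : x ∈ Icc (-1) 1) : 0 ≤ 1 - x ^ 2 :=
  sub_nonneg.2 <| sq_le_one_iff_abs_le_one x |>.2 <| abs_le.2 hx

theorem normalizedCentralBinom_mul_one_sub_sq_pow_le (d : ℕ) {x : ℝ} (hx : x ∈ Icc (-1) 1) :
    (2 * d + 1) * normalizedCentralBinom d * (1 - x ^ 2) ^ d ≤ (d + 1) * (2 * (1 - x)) ^ d := by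
  have base_nonneg := one_sub_sq_nonneg hx
  have base_le : 1 - x ^ 2 ≤ 2 * (1 - x) := by linarith [sq_nonneg (1 - x)]
  have coeff_le := two_mul_add_one_mul_normalizedCentralBinom_le d
  gcongr

section g

variable (d : ℕ)

theorem g_zero : g 0 = id := by
  ext m
  simp [g]

theorem g_succ (m : ℝ) :
    g (d + 1) m = g d m + normalizedCentralBinom (d + 1) * (m * (1 - m ^ 2) ^ (d + 1)) := by
  simp only [g, Finset.sum_range_succ _ (d + 1), normalizedCentralBinom, Nat.centralBinom,
    one_div_mul_eq_div]

theorem g_neg (m : ℝ) : g d (-m) = -g d m := by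
  simp [g]

theorem g_one : g d 1 = 1 := by
  simp [g, Finset.sum_range_succ']

theorem hasDerivAt_g (m : ℝ) :
    HasDerivAt (g d) ((2 * d + 1) * normalizedCentralBinom d * (1 - m ^ 2) ^ d) m := by
  induction d with
  | zero => simpa [g_zero, normalizedCentralBinom_zero] using hasDerivAt_id m
  | succ d ih =>
    rw [funext (g_succ d)]
    have base : HasDerivAt (fun x : ℝ => 1 - x ^ 2) (-(2 * m)) m := by
      simpa using (hasDerivAt_pow 2 m).const_sub 1
    have new_term :=
      ((hasDerivAt_id m).mul (base.pow (d + 1))).const_mul (normalizedCentralBinom (d + 1))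
    refine (ih.add new_term).congr_deriv ?_
    simp only [id_eq, Pi.pow_apply, Nat.add_sub_cancel, Nat.cast_add, Nat.cast_one]
    linear_combination (-(1 - m ^ 2) ^ d) * succ_mul_normalizedCentralBinom_succ d

theorem monotoneOn_g : MonotoneOn (g d) (Icc (-1) 1) := by
  refine monotoneOn_of_hasDerivWithinAt_nonneg (convex_Icc _ _)
    (fun x _ => (hasDerivAt_g d x).continuousAt.continuousWithinAt)
    (fun x _ => (hasDerivAt_g d x).hasDerivWithinAt) fun x hx => ?_
  have := one_sub_sq_nonneg (interior_subset hx)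
  have := normalizedCentralBinom_nonneg d
  positivity

theorem mapsTo_g_Icc : MapsTo (g d) (Icc (-1) 1) (Icc (-1) 1) := by
  simpa only [g_neg, g_one] using (monotoneOn_g d).mapsTo_Icc

theorem antitoneOn_pow_add_two_mul_g :
    AntitoneOn (fun x => (2 * (1 - x)) ^ (d + 1) + 2 * g d x) (Icc (-1) 1) := by
  have hderiv (x : ℝ) : HasDerivAt (fun x => (2 * (1 - x)) ^ (d + 1) + 2 * g d x)
      (2 * ((2 * d + 1) * normalizedCentralBinom d * (1 - x ^ 2) ^ d
        - (d + 1) * (2 * (1 - x)) ^ d)) x := by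
    have base : HasDerivAt (fun x : ℝ => 2 * (1 - x)) (-2) x := by
      simpa using ((hasDerivAt_id x).const_sub 1).const_mul 2
    refine ((base.pow (d + 1)).add ((hasDerivAt_g d x).const_mul 2)).congr_deriv ?_
    push_cast [Nat.add_sub_cancel]
    ring
  refine antitoneOn_of_hasDerivWithinAt_nonpos (convex_Icc _ _)
    (fun x _ => (hderiv x).continuousAt.continuousWithinAt)
    (fun x _ => (hderiv x).hasDerivWithinAt) fun x hx => ?_
  linarith [normalizedCentralBinom_mul_one_sub_sq_pow_le d (interior_subset hx)]

theorem two_mul_one_sub_g_le {m : ℝ} (hm : m ∈ Icc (-1) 1) :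
    2 * (1 - g d m) ≤ (2 * (1 - m)) ^ (d + 1) := by
  have at_one_le := antitoneOn_pow_add_two_mul_g d hm (right_mem_Icc.2 (by norm_num)) hm.2
  simp only [sub_self, mul_zero, ne_eq, Nat.succ_ne_zero, not_false_eq_true, zero_pow, g_one,
    zero_add] at at_one_le
  linarith

end g

theorem iterate_le_pow_pow {α M₀ : Type*} [MonoidWithZero M₀] [Preorder M₀] [PosMulMono M₀]
    [MulPosMono M₀] {f : α → α} {s : Set α} {φ : α → M₀} {n : ℕ} (hf : MapsTo f s s)
    (nonneg : ∀ x ∈ s, 0 ≤ φ x) (le_pow : ∀ x ∈ s, φ (f x) ≤ φ x ^ n) (k : ℕ) {x : α}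
    (hx : x ∈ s) : φ (f^[k] x) ≤ φ x ^ n ^ k := by
  induction k generalizing x with
  | zero => simp
  | succ k ih =>
    calc φ (f^[k + 1] x) = φ (f^[k] (f x)) := by rw [Function.iterate_succ_apply]
      _ ≤ φ (f x) ^ n ^ k := ih (hf hx)
      _ ≤ (φ x ^ n) ^ n ^ k := pow_le_pow_left₀ (nonneg _ (hf hx)) (le_pow x hx) _
      _ = φ x ^ n ^ (k + 1) := by rw [← pow_mul, pow_succ']

theorem stmt_7_general (d k : ℕ) {m : ℝ} (hm : m ∈ Icc (-1) 1) :
    2 * (1 - (g d)^[k] m) ≤ (2 * (1 - m)) ^ (d + 1) ^ k :=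
  iterate_le_pow_pow (φ := fun x => 2 * (1 - x)) (mapsTo_g_Icc d)
    (fun _ hx => mul_nonneg zero_le_two (sub_nonneg.2 hx.2))
    (fun _ hx => two_mul_one_sub_g_le d hx) k hm

theorem stmt_7 (d : ℕ) (hd : 1 ≤ d) (k : ℕ) (m : ℝ) (hm : m ∈ Set.Icc (0 : ℝ) 1) :
    2 * (1 - (g d)^[k] m) ≤ (2 * (1 - m)) ^ ((d + 1) ^ k) :=
  stmt_7_general d k (Icc_subset_Icc_left (by norm_num) hm)
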